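/- Let G be a finite connected simple graph with at least one edge. Then for every integer k ≥ 2, χ'^t_d(G^{1/k}) ≤ χ'^t_d(G^{1/(k+1)}), where G^{1/k} denotes the k-subdivision of G. -/

import Mathlib

/-!
The paths replacing the edges of `G` are shortened from length `k + 1` to length `k` one at a time,
each time turning a total dominator edge coloring into another one with the same colors. So all
the graphs in between must be treated, in which the edge `e` of `G` is replaced by a path of length
`ℓ e ≥ 2`. The edges of such a graph are encoded as pairs `(e, i)` with `i < ℓ e`, with adjacency
`PAdj`, and the colorings become total dominator vertex colorings `TDC` of this line graph.

Consider a path of length `k + 1 ≥ 3`, the one of `e`.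

* Some edge `p` of the path is alone in its color class. Contract a neighbor `q` of `p` on the path,
  `p` keeping its color. An edge whose dominating class contained `q` was adjacent to `q`, so it
  becomes adjacent to `p` and is dominated by `{p}`. Only `p` itself could suffer, namely if `{q}`
  is the class dominating it (`step_single`). When `p` has no other neighbor on the path to contract
  instead, `p` is an end of the path and `q` is itself a singleton class, dominated by `{p}`; then
  the next edge after `q` is contracted into `q`.
* No edge of the path is alone in its class. Then the class dominating an inner edge `(e, m)` must
  be exactly `{(e, m - 1), (e, m + 1)}`. If `k + 1 ≥ 5` then the class of `(e, 2)` would be both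
  `{(e, 0), (e, 2)}` and `{(e, 2), (e, 4)}`. If `k + 1 = 4` the path is colored `a, b, a, b` with
  colors occurring nowhere else, and it becomes `a, b, a` (`step_four`). If `k + 1 = 3` it is colored
  `a, b, a` with `a` occurring nowhere else; it becomes `a, b`, and the edge colored `b` of another
  path at the end `t e`, if there is one, is recolored `a` (`step_three`). This case uses that `G` is
  simple.

The lemma `step` combines the cases, `steps` runs through all edges of `G`, and `exists_isTDE_iff`
identifies colorings of the model with those of `subdivision G k`. As `tdec` is an infimum in `ℕ`,
which is `0` on the empty set, a coloring of the `(k + 1)`-subdivision must also be exhibited: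
`exists_TDC` gives all edges different colors.
-/

open SimpleGraph

/-- Two edges of a simple graph are adjacent if they are distinct and share an endpoint. -/
def edgeAdj {V : Type*} (e f : Sym2 V) : Prop :=
  e ≠ f ∧ ∃ v, v ∈ e ∧ v ∈ f

/-- `c` is a total dominator edge coloring of `G` using colors from `{0, …, n-1}`:
a proper edge coloring such that every edge is adjacent to every edge of some
nonempty color class. -/
def IsTDEColoring {V : Type*} (G : SimpleGraph V) (n : ℕ) (c : Sym2 V → ℕ) : Prop :=
  (∀ e ∈ G.edgeSet, c e < n) ∧
  (∀ e ∈ G.edgeSet, ∀ f ∈ G.edgeSet, edgeAdj e f → c e ≠ c f) ∧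
  (∀ e ∈ G.edgeSet, ∃ i, (∃ f ∈ G.edgeSet, c f = i) ∧
      ∀ f ∈ G.edgeSet, c f = i → edgeAdj e f)

/-- The total dominator edge chromatic number of `G`: the minimum number of colors
in a total dominator edge coloring of `G`. -/
noncomputable def tdec {V : Type*} (G : SimpleGraph V) : ℕ :=
  sInf {n | ∃ c : Sym2 V → ℕ, IsTDEColoring G n c}

/-- The k-subdivision of `G`: each edge `e` of `G` (with chosen endpoints
`(Quot.out e.1).1` and `(Quot.out e.1).2`) is replaced by a path of length `k`
through `k - 1` new internal vertices. For `k = 1` this is `G` itself. -/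
noncomputable def subdivision {V : Type*} (G : SimpleGraph V) (k : ℕ) :
    SimpleGraph (V ⊕ (G.edgeSet × Fin (k - 1))) :=
  SimpleGraph.fromRel (fun x y =>
    match x, y with
    | .inl v, .inl w => k = 1 ∧ G.Adj v w
    | .inl v, .inr (e, i) =>
        (v = (Quot.out e.1).1 ∧ (i : ℕ) = 0) ∨
        (v = (Quot.out e.1).2 ∧ (i : ℕ) = k - 2)
    | .inr _, .inl _ => False
    | .inr (e, i), .inr (f, j) => e = f ∧ (j : ℕ) = (i : ℕ) + 1)

/-! ### Total dominator colorings and contraction -/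

/-- Total dominator vertex coloring, with colors below `n`, of the graph with vertex set `P` and
adjacency `A`: a proper coloring in which every vertex is adjacent to all of some nonempty class. -/
structure TDC {X : Type*} (P : X → Prop) (A : X → X → Prop) (n : ℕ) (c : X → ℕ) : Prop where
  lt : ∀ x, P x → c x < n
  proper : ∀ x y, P x → P y → A x y → c x ≠ c y
  dom : ∀ x, P x → ∃ i, (∃ y, P y ∧ c y = i) ∧ ∀ y, P y → c y = i → A x y

/-- Let `φ` embed `P'` into `P`, missing at most `q`, in such a way that adjacency is only gained,
and only at `p`, and that `p` inherits the neighbors of `q`. If `φ p` is alone in its class and is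
dominated by a class other than `{q}`, then the coloring pulls back along `φ`: the class `{p}`
replaces the class of `q` as a dominating class. -/
theorem TDC.contract {X X' : Type*} {P : X → Prop} {A : X → X → Prop} {P' : X' → Prop}
    {A' : X' → X' → Prop} {n : ℕ} {c : X → ℕ} (h : TDC P A n c) (φ : X' → X) (q : X) (p : X')
    (hp : P' p) (hinj : ∀ x y, P' x → P' y → φ x = φ y → x = y)
    (hP : ∀ x, P' x → P (φ x)) (hsurj : ∀ y, P y → y ≠ q → ∃ x, P' x ∧ φ x = y)
    (h1 : ∀ x y, P' x → P' y → A' x y → A (φ x) (φ y) ∨ x = p ∨ y = p)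
    (h2 : ∀ x y, P' x → P' y → A (φ x) (φ y) → A' x y)
    (h3 : ∀ x, P' x → x ≠ p → A (φ x) q → A' x p)
    (hirr : ∀ x, P' x → ¬ A' x x)
    (hsing : ∀ y, P y → c y = c (φ p) → y = φ p)
    (i : ℕ) (hi : ∃ y, P y ∧ y ≠ q ∧ c y = i) (hi' : ∀ y, P y → c y = i → A (φ p) y) :
    TDC P' A' n (fun x => c (φ x)) := by
  refine ⟨fun x hx => h.lt _ (hP x hx), ?_, ?_⟩
  · intro x y hx hy hxy hc
    rcases h1 x y hx hy hxy with h' | rfl | rfl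
    · exact h.proper _ _ (hP x hx) (hP y hy) h' hc
    · have := hinj _ _ hy hx (hsing _ (hP y hy) hc.symm)
      subst this; exact hirr _ hx hxy
    · have := hinj _ _ hx hy (hsing _ (hP x hx) hc)
      subst this; exact hirr _ hx hxy
  · intro x hx
    by_cases hxp : x = p
    · subst hxp
      obtain ⟨y, hy, hyq, rfl⟩ := hi
      obtain ⟨z, hz, rfl⟩ := hsurj y hy hyq
      exact ⟨_, ⟨z, hz, rfl⟩, fun w hw hcw => h2 _ _ hx hw (hi' _ (hP w hw) hcw)⟩
    · obtain ⟨j, ⟨y, hy, hyj⟩, hj⟩ := h.dom _ (hP x hx)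
      by_cases hq : P q ∧ c q = j
      · refine ⟨c (φ p), ⟨p, hp, rfl⟩, fun w hw hcw => ?_⟩
        have := hinj _ _ hw hp (hsing _ (hP w hw) hcw)
        subst this
        exact h3 x hx hxp (hj q hq.1 hq.2)
      · obtain ⟨z, hz, rfl⟩ := hsurj y hy (by rintro rfl; exact hq ⟨hy, hyj⟩)
        exact ⟨j, ⟨z, hz, hyj⟩, fun w hw hcw => h2 _ _ hx hw (hj _ (hP w hw) hcw)⟩

/-! ### The line graph of a subdivision with prescribed path lengths -/

section Model
variable {E V : Type*}

/-- The pair `x = (e, i)` encodes an edge of the subdivided graph: the `i`-th edge, counted from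
`0`, of the path of length `ℓ e` replacing `e`. -/
def PValid (ℓ : E → ℕ) (x : E × ℕ) : Prop := x.2 < ℓ x.1

/-- The vertex `v` of the original graph is an endpoint of the edge `x = (e, i)`. The path
replacing `e` runs from `s e` to `t e`. -/
def PAt (s t : E → V) (ℓ : E → ℕ) (x : E × ℕ) (v : V) : Prop :=
  (x.2 = 0 ∧ v = s x.1) ∨ (x.2 + 1 = ℓ x.1 ∧ v = t x.1)

/-- Adjacency of edges: consecutive edges of one path, or edges of different paths that meet in a
vertex of the original graph. For `x.1 = y.1` only the first alternative is possible, since an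
original edge has distinct ends and its path has length at least `2`. -/
def PAdj (s t : E → V) (ℓ : E → ℕ) (x y : E × ℕ) : Prop :=
  (x.1 = y.1 ∧ (x.2 + 1 = y.2 ∨ y.2 + 1 = x.2)) ∨
    (x.1 ≠ y.1 ∧ ∃ v, PAt s t ℓ x v ∧ PAt s t ℓ y v)

variable [DecidableEq E] {s t : E → V} {ℓ : E → ℕ} {e : E} {n k : ℕ} {c : E × ℕ → ℕ}

theorem pat_update_ne {x : E × ℕ} (hx : x.1 ≠ e) (v : V) :
    PAt s t (Function.update ℓ e k) x v ↔ PAt s t ℓ x v := by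
  unfold PAt; rw [Function.update_of_ne hx]

theorem padj_update_ne {x y : E × ℕ} (hx : x.1 ≠ e) (hy : y.1 ≠ e) :
    PAdj s t (Function.update ℓ e k) x y ↔ PAdj s t ℓ x y := by
  unfold PAdj; simp only [pat_update_ne hx, pat_update_ne hy]

/-- The embedding of the shortened path of `e` into the old one that leaves out position `q`; it is
the identity on the other paths. -/
def skip (e : E) (q : ℕ) (x : E × ℕ) : E × ℕ :=
  if x.1 = e ∧ q ≤ x.2 then (x.1, x.2 + 1) else x

/-! ### Shortening one path -/

/-- Contraction of the edge `(e, q)` into its neighbor `(e, p)`, which is alone in its class and is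
dominated by a class `i` other than `{(e, q)}`. The merged edge is at position `min p q` of the
new path. -/
theorem step_single (he : ℓ e = k + 1)
    (h : TDC (PValid ℓ) (PAdj s t ℓ) n c) (p q : ℕ) (hp : p ≤ k) (hq : q ≤ k)
    (hpq : p = q + 1 ∨ q = p + 1)
    (hsing : ∀ y, PValid ℓ y → c y = c (e, p) → y = (e, p))
    (i : ℕ) (hi : ∃ y, PValid ℓ y ∧ y ≠ (e, q) ∧ c y = i)
    (hi' : ∀ y, PValid ℓ y → c y = i → PAdj s t ℓ (e, p) y) :
    ∃ c', TDC (PValid (Function.update ℓ e k)) (PAdj s t (Function.update ℓ e k)) n c' := by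
  have hφp : skip e q (e, min p q) = (e, p) := by
    unfold skip; grind
  have hfst : ∀ x : E × ℕ, (skip e q x).1 = x.1 := by
    intro x; unfold skip; split_ifs <;> rfl
  have hat : ∀ (x : E × ℕ) v, PValid (Function.update ℓ e k) x → x ≠ (e, min p q) →
      PAt s t (Function.update ℓ e k) x v → PAt s t ℓ (skip e q x) v := by
    clear hsing hi' hi h hφp
    rintro ⟨a, i⟩ v hv hne
    by_cases hae : a = e
    · subst hae
      simp only [PValid, Function.update_self, ne_eq, Prod.mk.injEq, true_and] at hv hne
      unfold PAt skip
      rintro (⟨h1, rfl⟩ | ⟨h1, rfl⟩)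
      · simp only [Function.update_self, true_and] at *
        rw [if_neg (by omega)]; exact Or.inl ⟨h1, rfl⟩
      · simp only [Function.update_self, true_and] at *
        rw [if_pos (by omega)]; exact Or.inr ⟨by dsimp only; omega, rfl⟩
    · simp [PAt, skip, hae]
  have hat' : ∀ (x : E × ℕ) v, PValid (Function.update ℓ e k) x →
      PAt s t ℓ (skip e q x) v → PAt s t (Function.update ℓ e k) x v := by
    clear hsing hi' hi h hφp hat
    rintro ⟨a, i⟩ v hv
    by_cases hae : a = e
    · subst hae
      simp only [PValid, Function.update_self] at hv
      unfold PAt skip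
      simp only [Function.update_self, true_and]
      split_ifs <;> dsimp only <;> rw [he] <;> rintro (⟨h1, rfl⟩ | ⟨h1, rfl⟩) <;>
        first | (exfalso; omega) | (exact Or.inl ⟨by omega, rfl⟩) | (exact Or.inr ⟨by omega, rfl⟩)
    · simp [PAt, skip, hae]
  refine ⟨_, h.contract (skip e q) (e, q) (e, min p q) ?_ ?_ ?_ ?_ ?_ ?_ ?_ ?_
    (by rwa [hφp]) i hi (by rwa [hφp])⟩
  · simp [PValid]; omega
  · rintro ⟨a, i⟩ ⟨b, j⟩ - -; unfold skip; grind
  · rintro ⟨a, i⟩; unfold skip PValid; simp only [Function.update_apply]; grind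
  · rintro ⟨a, i⟩ hv hne
    refine ⟨(a, if a = e ∧ q < i then i - 1 else i), ?_, ?_⟩
    · revert hv hne; unfold PValid; simp only [Function.update_apply]; grind
    · revert hv hne; unfold skip PValid; grind
  · intro x y hx hy hxy
    by_cases hxp : x = (e, min p q)
    · exact Or.inr (Or.inl hxp)
    by_cases hyp : y = (e, min p q)
    · exact Or.inr (Or.inr hyp)
    left
    rcases hxy with ⟨hxy, hij⟩ | ⟨hxy, v, hxv, hyv⟩
    · refine Or.inl ⟨by rw [hfst, hfst, hxy], ?_⟩
      clear hsing hi' hi h hφp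
      obtain ⟨a, i⟩ := x; obtain ⟨b, j⟩ := y
      dsimp only at hxy hij
      subst hxy
      by_cases hae : a = e
      · subst hae
        simp only [Prod.mk.injEq, true_and] at hxp hyp
        simp only [skip, true_and]
        split_ifs <;> dsimp only <;> omega
      · simpa [skip, hae] using hij
    · exact Or.inr ⟨by rwa [hfst, hfst], v, hat x v hx hxp hxv, hat y v hy hyp hyv⟩
  · intro x y hx hy hxy
    rcases hxy with ⟨hxy, hij⟩ | ⟨hxy, v, hxv, hyv⟩
    · rw [hfst, hfst] at hxy
      refine Or.inl ⟨hxy, ?_⟩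
      clear hsing hi' hi h hφp
      obtain ⟨a, i⟩ := x; obtain ⟨b, j⟩ := y
      dsimp only at hxy
      subst hxy
      by_cases hae : a = e
      · subst hae
        revert hij
        simp only [skip, true_and]
        split_ifs <;> dsimp only <;> omega
      · simpa [skip, hae] using hij
    · rw [hfst, hfst] at hxy
      exact Or.inr ⟨hxy, v, hat' x v hx hxv, hat' y v hy hyv⟩
  · intro x hx hxp hxq
    rcases hxq with ⟨hxq, hij⟩ | ⟨hxq, v, hxv, hqv⟩
    · rw [hfst] at hxq
      refine Or.inl ⟨hxq, ?_⟩
      clear hsing hi' hi h hφp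
      obtain ⟨a, i⟩ := x
      dsimp only at hxq
      subst hxq
      simp only [ne_eq, Prod.mk.injEq, true_and] at hxp
      revert hij
      simp only [skip, true_and]
      split_ifs <;> dsimp only <;> omega
    · rw [hfst] at hxq
      refine Or.inr ⟨hxq, v, hat' x v hx hxv, ?_⟩
      clear hsing hi' hi h hφp
      revert hqv; unfold PAt; simp only [Function.update_self, he]
      rintro (⟨h1, rfl⟩ | ⟨h1, rfl⟩)
      · left; simp only [and_true]; omega
      · right; simp only [and_true]; omega
  · rintro ⟨a, i⟩; unfold PValid PAdj; grind

/-- A path colored `a, b, a, b`, with neither color occurring elsewhere, loses its last edge. Edges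
of other paths were not dominated by the class `a` or `b`, each of which contains an inner edge of
the path. -/
theorem step_four (he : ℓ e = 4)
    (h : TDC (PValid ℓ) (PAdj s t ℓ) n c)
    (ha : ∀ y, PValid ℓ y → (c y = c (e, 0) ↔ y = (e, 0) ∨ y = (e, 2)))
    (hb : ∀ y, PValid ℓ y → (c y = c (e, 1) ↔ y = (e, 1) ∨ y = (e, 3))) :
    ∃ c', TDC (PValid (Function.update ℓ e 3)) (PAdj s t (Function.update ℓ e 3)) n c' := by
  have hPV : ∀ x, PValid (Function.update ℓ e 3) x → PValid ℓ x := by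
    rintro ⟨a, i⟩; unfold PValid; simp only [Function.update_apply]; grind
  have hpos : ∀ i, PValid (Function.update ℓ e 3) (e, i) ↔ i < 3 := by
    intro i; simp [PValid]
  have hposl : ∀ i, PValid ℓ (e, i) ↔ i < 4 := by
    intro i; simp [PValid, he]
  have hc2 : c (e, 2) = c (e, 0) := (ha _ ((hposl 2).2 (by omega))).2 (Or.inr rfl)
  refine ⟨c, fun x hx => h.lt x (hPV x hx), ?_, ?_⟩
  · rintro x y hx hy hxy hc
    by_cases hA : PAdj s t ℓ x y
    · exact h.proper _ _ (hPV x hx) (hPV y hy) hA hc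
    · have key : x = (e, 2) ∧ y.1 ≠ e ∨ y = (e, 2) ∧ x.1 ≠ e := by
        obtain ⟨a, i⟩ := x; obtain ⟨b, j⟩ := y
        have hpat : ∀ m v, m ≠ 2 → PAt s t (Function.update ℓ e 3) (e, m) v →
            PAt s t ℓ (e, m) v := by
          rintro m v hm (⟨h1, h2⟩ | ⟨h1, h2⟩)
          · exact Or.inl ⟨h1, h2⟩
          · simp only [Function.update_self] at h1; omega
        rcases hxy with hxy | ⟨hab, v, hav, hbv⟩
        · exact absurd (Or.inl hxy) hA
        · dsimp only at hab
          by_cases hae : a = e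
          · subst hae
            by_cases hi : i = 2
            · exact Or.inl ⟨by rw [hi], Ne.symm hab⟩
            · exact absurd (Or.inr ⟨hab, v, hpat i v hi hav, (pat_update_ne hab.symm v).1 hbv⟩) hA
          · rw [pat_update_ne hae] at hav
            by_cases hbe : b = e
            · subst hbe
              by_cases hj : j = 2
              · exact Or.inr ⟨by rw [hj], hab⟩
              · exact absurd (Or.inr ⟨hab, v, hav, hpat j v hj hbv⟩) hA
            · rw [pat_update_ne hbe] at hbv
              exact absurd (Or.inr ⟨hab, v, hav, hbv⟩) hA
      rcases key with ⟨rfl, hy'⟩ | ⟨rfl, hx'⟩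
      · have := (ha y (hPV y hy)).1 (by rw [← hc, hc2])
        rcases this with rfl | rfl <;> exact hy' rfl
      · have := (ha x (hPV x hx)).1 (by rw [hc, hc2])
        rcases this with rfl | rfl <;> exact hx' rfl
  · rintro ⟨a, i⟩ hx
    by_cases hae : a = e
    · subst hae
      have hi := (hpos i).1 hx
      by_cases hi1 : i = 1
      · subst hi1
        refine ⟨c (a, 0), ⟨(a, 0), (hpos 0).2 (by omega), rfl⟩, fun y hy hcy => ?_⟩
        rcases (ha y (hPV y hy)).1 hcy with rfl | rfl <;> simp [PAdj]
      · refine ⟨c (a, 1), ⟨(a, 1), (hpos 1).2 (by omega), rfl⟩, fun y hy hcy => ?_⟩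
        rcases (hb y (hPV y hy)).1 hcy with rfl | rfl
        · simp [PAdj]; omega
        · exact absurd ((hpos 3).1 hy) (by omega)
    · obtain ⟨j, ⟨y, hy, hyj⟩, hj⟩ := h.dom _ (hPV _ hx)
      have hn1 : ¬ PAdj s t ℓ (a, i) (e, 1) := by
        unfold PAdj PAt; grind
      have hn2 : ¬ PAdj s t ℓ (a, i) (e, 2) := by
        unfold PAdj PAt; grind
      have hja : j ≠ c (e, 0) := fun hh => hn2 (hj _ ((hposl 2).2 (by omega)) (by rw [hc2, hh]))
      have hjb : j ≠ c (e, 1) := fun hh => hn1 (hj _ ((hposl 1).2 (by omega)) hh.symm)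
      have hne : ∀ w, PValid ℓ w → c w = j → w.1 ≠ e := by
        rintro ⟨b, m⟩ hw hcw rfl
        have hm := (hposl m).1 hw
        have hc3 : c (b, 3) = c (b, 1) := (hb _ ((hposl 3).2 (by omega))).2 (Or.inr rfl)
        interval_cases m <;> simp_all
      refine ⟨j, ⟨y, ?_, hyj⟩, fun w hw hcw => ?_⟩
      · have := hne y hy hyj
        revert hy; unfold PValid; rw [Function.update_of_ne this]; exact id
      · have h1 := hne w (hPV w hw) hcw
        have h2 := hj w (hPV w hw) hcw
        exact (padj_update_ne hae h1).2 h2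

/-- A path colored `a, b, a`, with `a` not occurring elsewhere, loses its last edge. The edges of
other paths that meet the new last edge `(e, 1)` and have its color `b` are recolored `a`; they all
contain `t e`, so there is at most one, and as `G` is simple it does not meet `(e, 0)`. Now the
class `a` dominates `(e, 1)`. Edges of other paths are dominated neither by the old class `a`,
which would make them meet both ends of the path, nor by `b`, which contains the inner edge. -/
theorem step_three (he : ℓ e = 3) (hst : ∀ e, s e ≠ t e) (hl : ∀ e, 2 ≤ ℓ e)
    (hsimp : ∀ e f v w, v ≠ w → (v = s e ∨ v = t e) → (w = s e ∨ w = t e) →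
      (v = s f ∨ v = t f) → (w = s f ∨ w = t f) → e = f)
    (h : TDC (PValid ℓ) (PAdj s t ℓ) n c)
    (ha : ∀ y, PValid ℓ y → (c y = c (e, 0) ↔ y = (e, 0) ∨ y = (e, 2))) :
    ∃ c', TDC (PValid (Function.update ℓ e 2)) (PAdj s t (Function.update ℓ e 2)) n c' := by
  classical
  have hPV : ∀ x, PValid (Function.update ℓ e 2) x → PValid ℓ x := by
    rintro ⟨a, i⟩; unfold PValid; simp only [Function.update_apply]; grind
  have hpos : ∀ i, PValid (Function.update ℓ e 2) (e, i) ↔ i < 2 := by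
    intro i; simp [PValid]
  have hposl : ∀ i, PValid ℓ (e, i) ↔ i < 3 := by
    intro i; simp [PValid, he]
  have hc2 : c (e, 2) = c (e, 0) := (ha _ ((hposl 2).2 (by omega))).2 (Or.inr rfl)
  have hab : c (e, 0) ≠ c (e, 1) :=
    h.proper _ _ ((hposl 0).2 (by omega)) ((hposl 1).2 (by omega)) (by simp [PAdj])
  have hout : ∀ x, PValid ℓ x → x.1 ≠ e → c x ≠ c (e, 0) := by
    rintro ⟨b, m⟩ hx hne hc
    rcases (ha _ hx).1 hc with h' | h' <;> simp_all
  have hadj : ∀ x y : E × ℕ, x.1 ≠ e → y.1 ≠ e →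
      (PAdj s t (Function.update ℓ e 2) x y ↔ PAdj s t ℓ x y) :=
    fun x y hx hy => padj_update_ne hx hy
  have h0 : ∀ x : E × ℕ, x.1 ≠ e →
      (PAdj s t (Function.update ℓ e 2) (e, 0) x ↔ PAt s t ℓ x (s e)) := by
    rintro ⟨a, i⟩ hx
    unfold PAdj PAt; simp only [Function.update_apply]; grind
  have h1 : ∀ x : E × ℕ, x.1 ≠ e →
      (PAdj s t (Function.update ℓ e 2) (e, 1) x ↔ PAt s t ℓ x (t e)) := by
    rintro ⟨a, i⟩ hx
    unfold PAdj PAt; simp only [Function.update_apply]; grind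
  have h0l : ∀ x : E × ℕ, x.1 ≠ e → (PAdj s t ℓ (e, 0) x ↔ PAt s t ℓ x (s e)) := by
    refine fun x hx => ⟨?_, fun h => Or.inr ⟨Ne.symm hx, s e, Or.inl ⟨rfl, rfl⟩, h⟩⟩
    rintro (⟨h, -⟩ | ⟨-, v, ⟨-, rfl⟩ | ⟨h, -⟩, h'⟩)
    · exact absurd h.symm hx
    · exact h'
    · simp only [he] at h; omega
  have hsym : ∀ ℓ' (x y : E × ℕ), PAdj s t ℓ' x y → PAdj s t ℓ' y x := by
    unfold PAdj; grind
  have hboth : ∀ x : E × ℕ, x.1 ≠ e → PAt s t ℓ x (s e) → PAt s t ℓ x (t e) → False := by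
    rintro ⟨a, i⟩ hx
    have := hst e
    have := hl a
    have := hsimp e a (s e) (t e)
    unfold PAt; grind
  have hVout : ∀ x : E × ℕ, x.1 ≠ e → (PValid (Function.update ℓ e 2) x ↔ PValid ℓ x) := by
    intro x hx; unfold PValid; rw [Function.update_of_ne hx]
  -- the edges to be recolored with the color of `(e, 0)`
  let R : E × ℕ → Prop := fun x => x.1 ≠ e ∧ c x = c (e, 1) ∧ PAt s t ℓ x (t e)
  let c' : E × ℕ → ℕ := fun x => if R x then c (e, 0) else c x
  have hc'e : ∀ i, c' (e, i) = c (e, i) := by intro i; simp [c', R]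
  have hc'R : ∀ x, R x → c' x = c (e, 0) := by intro x hx; simp [c', hx]
  have hc'n : ∀ x, ¬ R x → c' x = c x := by intro x hx; simp [c', hx]
  have hcase : ∀ x, PValid (Function.update ℓ e 2) x → x = (e, 0) ∨ x = (e, 1) ∨ x.1 ≠ e := by
    rintro ⟨a, i⟩ hx
    by_cases hae : a = e
    · subst hae
      have := (hpos i).1 hx
      interval_cases i <;> simp
    · simp [hae]
  -- properness, up to symmetry
  have hpr0 : ∀ y, PValid ℓ y → y.1 ≠ e →
      PAdj s t (Function.update ℓ e 2) (e, 0) y → c' (e, 0) ≠ c' y := by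
    intro y hy hye hA
    rw [h0 y hye] at hA
    have hR : ¬ R y := fun hR => hboth y hye hA hR.2.2
    rw [hc'e, hc'n y hR]
    exact (hout y hy hye).symm
  have hpr1 : ∀ y, PValid ℓ y → y.1 ≠ e →
      PAdj s t (Function.update ℓ e 2) (e, 1) y → c' (e, 1) ≠ c' y := by
    intro y hy hye hA
    rw [h1 y hye] at hA
    rw [hc'e]
    by_cases hR : R y
    · rw [hc'R y hR]; exact hab.symm
    · rw [hc'n y hR]; exact fun hh => hR ⟨hye, hh.symm, hA⟩
  -- classes other than the colors of `(e, 0)` and `(e, 1)` are unchanged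
  have hcls : ∀ j, j ≠ c (e, 0) → j ≠ c (e, 1) → ∀ y, PValid ℓ y → c y = j →
      y.1 ≠ e ∧ c' y = j := by
    rintro j hja hjb ⟨b, m⟩ hy hcy
    have hne : b ≠ e := by
      rintro rfl
      have hm := (hposl m).1 hy
      interval_cases m <;> simp_all
    exact ⟨hne, by rw [hc'n _ (fun hR => hjb (hcy ▸ hR.2.1)), hcy]⟩
  have hcls' : ∀ j, j ≠ c (e, 0) → ∀ y, c' y = j → c y = j := by
    intro j hja y hy
    by_cases hR : R y
    · exact absurd (hy.symm.trans (hc'R y hR)) hja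
    · rwa [hc'n y hR] at hy
  refine ⟨c', ?_, ?_, ?_⟩
  · intro x hx
    by_cases hR : R x
    · rw [hc'R x hR]; exact h.lt _ ((hposl 0).2 (by omega))
    · rw [hc'n x hR]; exact h.lt _ (hPV x hx)
  · intro x y hx hy hxy
    have hxl := hPV x hx
    have hyl := hPV y hy
    rcases hcase x hx with rfl | rfl | hxe <;> rcases hcase y hy with rfl | rfl | hye
    · simp [PAdj] at hxy
    · rw [hc'e, hc'e]; exact hab
    · exact hpr0 y hyl hye hxy
    · rw [hc'e, hc'e]; exact hab.symm
    · simp [PAdj] at hxy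
    · exact hpr1 y hyl hye hxy
    · exact (hpr0 x hxl hxe (hsym _ _ _ hxy)).symm
    · exact (hpr1 x hxl hxe (hsym _ _ _ hxy)).symm
    · have hcc := h.proper x y hxl hyl ((hadj x y hxe hye).1 hxy)
      by_cases hRx : R x <;> by_cases hRy : R y
      · exact absurd (hRx.2.1.trans hRy.2.1.symm) hcc
      · rw [hc'R x hRx, hc'n y hRy]; exact (hout y hyl hye).symm
      · rw [hc'n x hRx, hc'R y hRy]; exact hout x hxl hxe
      · rwa [hc'n x hRx, hc'n y hRy]
  · intro x hx
    rcases hcase x hx with rfl | rfl | hxe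
    · obtain ⟨j, ⟨y, hy, hyj⟩, hj⟩ := h.dom _ (hPV _ hx)
      have hja : j ≠ c (e, 0) := by
        rintro rfl
        have := hj _ (hPV _ hx) rfl
        simp [PAdj] at this
      have hall : ∀ w, PValid (Function.update ℓ e 2) w → c' w = j →
          PAdj s t (Function.update ℓ e 2) (e, 0) w := by
        intro w hw hcw
        rcases hcase w hw with rfl | rfl | hwe
        · exact absurd (hcw.symm.trans (hc'e 0)) hja
        · simp [PAdj]
        · rw [h0 w hwe, ← h0l w hwe]
          exact hj w (hPV w hw) (hcls' j hja w hcw)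
      by_cases hjb : j = c (e, 1)
      · exact ⟨j, ⟨(e, 1), (hpos 1).2 (by omega), by rw [hc'e, hjb]⟩, hall⟩
      · obtain ⟨hye, hc'y⟩ := hcls j hja hjb y hy hyj
        exact ⟨j, ⟨y, (hVout y hye).2 hy, hc'y⟩, hall⟩
    · refine ⟨c (e, 0), ⟨(e, 0), (hpos 0).2 (by omega), hc'e 0⟩, fun w hw hcw => ?_⟩
      rcases hcase w hw with rfl | rfl | hwe
      · simp [PAdj]
      · exact absurd (hcw.symm.trans (hc'e 1)) hab
      · rw [h1 w hwe]
        by_contra hcon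
        have hR : ¬ R w := fun hR => hcon hR.2.2
        rw [hc'n w hR] at hcw
        exact hout w (hPV w hw) hwe hcw
    · obtain ⟨j, ⟨y, hy, hyj⟩, hj⟩ := h.dom _ (hPV _ hx)
      have hjb : j ≠ c (e, 1) := by
        rintro rfl
        have := hj _ ((hposl 1).2 (by omega)) rfl
        revert this; obtain ⟨a, i⟩ := x; unfold PAdj PAt; grind
      have hja : j ≠ c (e, 0) := by
        rintro rfl
        have h0' := (h0l x hxe).1 (hsym _ _ _ (hj _ ((hposl 0).2 (by omega)) rfl))
        have h2' := hj _ ((hposl 2).2 (by omega)) hc2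
        refine hboth x hxe h0' ?_
        revert h2'; obtain ⟨a, i⟩ := x; unfold PAdj PAt; grind
      obtain ⟨hye, hc'y⟩ := hcls j hja hjb y hy hyj
      refine ⟨j, ⟨y, (hVout y hye).2 hy, hc'y⟩, fun w hw hcw => ?_⟩
      have hcw' := hcls' j hja w hcw
      have hwe := (hcls j hja hjb w (hPV w hw) hcw').1
      exact (hadj x w hxe hwe).2 (hj w (hPV w hw) hcw')

/-- The path of `e` can be shortened by one without using new colors. The hypothesis `hsimp` says
that an original edge is determined by its two ends. -/
theorem step (hk : 2 ≤ k) (he : ℓ e = k + 1) (hst : ∀ e, s e ≠ t e) (hl : ∀ e, 2 ≤ ℓ e)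
    (hsimp : ∀ e f v w, v ≠ w → (v = s e ∨ v = t e) → (w = s e ∨ w = t e) →
      (v = s f ∨ v = t f) → (w = s f ∨ w = t f) → e = f)
    (h : TDC (PValid ℓ) (PAdj s t ℓ) n c) :
    ∃ c', TDC (PValid (Function.update ℓ e k)) (PAdj s t (Function.update ℓ e k)) n c' := by
  have hpos : ∀ i, PValid ℓ (e, i) ↔ i < k + 1 := by
    intro i; simp [PValid, he]
  by_cases hs : ∃ p ≤ k, ∀ y, PValid ℓ y → c y = c (e, p) → y = (e, p)
  · obtain ⟨p, hp, hsing⟩ := hs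
    obtain ⟨j, ⟨y, hy, hyj⟩, hj⟩ := h.dom (e, p) ((hpos p).2 (by omega))
    -- `y` lies in a class dominating `(e, p)`; any path neighbor of `(e, p)` but `y` can go
    by_cases hq : ∃ q ≤ k, (p = q + 1 ∨ q = p + 1) ∧ y ≠ (e, q)
    · obtain ⟨q, hqk, hpq, hyq⟩ := hq
      exact step_single he h p q hp hqk hpq hsing j ⟨y, hy, hyq, hyj⟩ hj
    · by_cases hgood : ∃ q ≤ k, (p = q + 1 ∨ q = p + 1) ∧ ∃ z, PValid ℓ z ∧ z ≠ (e, q) ∧ c z = j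
      · obtain ⟨q, hqk, hpq, hz⟩ := hgood
        exact step_single he h p q hp hqk hpq hsing j hz hj
      · -- now `p` is an end of the path and its only neighbor `(e, q)` is a singleton class
        push Not at hq hgood
        have key : ∃ q r, q ≤ k ∧ r ≤ k ∧ (p = q + 1 ∨ q = p + 1) ∧ (q = r + 1 ∨ r = q + 1) ∧
            p ≠ r := by
          by_cases hp0 : p = 0
          · exact ⟨1, 2, by omega, by omega, by omega, by omega, by omega⟩
          · by_cases hpk : p = k
            · exact ⟨k - 1, k - 2, by omega, by omega, by omega, by omega, by omega⟩
            · have h1 := hq (p - 1) (by omega) (by omega)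
              have h2 := hq (p + 1) (by omega) (by omega)
              rw [h1, Prod.mk.injEq] at h2
              omega
        obtain ⟨q, r, hqk, hrk, hpq, hqr, hpr⟩ := key
        have hyq := hq q hqk hpq
        subst hyq
        refine step_single he h q r hqk hrk hqr ?_ (c (e, p))
          ⟨(e, p), (hpos p).2 (by omega), by simp [hpr], rfl⟩ ?_
        · intro z hz hcz
          by_contra hne
          exact hgood q hqk hpq z hz hne (hcz.trans hyj)
        · intro z hz hcz
          rw [hsing z hz hcz]
          simp [PAdj]; omega
  · -- without singleton classes on the path, the class dominating `(e, m)` is all of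
    -- `{(e, m - 1), (e, m + 1)}`
    push Not at hs
    have hint : ∀ m, 0 < m → m < k → ∀ y, PValid ℓ y →
        (c y = c (e, m - 1) ↔ y = (e, m - 1) ∨ y = (e, m + 1)) := by
      intro m hm hmk
      obtain ⟨j, ⟨y, hy, hyj⟩, hj⟩ := h.dom (e, m) ((hpos m).2 (by omega))
      have hsub : ∀ z, PValid ℓ z → c z = j → z = (e, m - 1) ∨ z = (e, m + 1) := by
        rintro ⟨b, i⟩ hz hcz
        have := hj _ hz hcz
        revert this; unfold PAdj PAt; grind
      have hlow := hs (m - 1) (by omega)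
      have hup := hs (m + 1) (by omega)
      grind
    have ha : ∀ y, PValid ℓ y → (c y = c (e, 0) ↔ y = (e, 0) ∨ y = (e, 2)) :=
      hint 1 (by omega) (by omega)
    rcases Nat.lt_or_ge k 3 with hk3 | hk3
    · obtain rfl : k = 2 := by omega
      exact step_three he hst hl hsimp h ha
    · have hb : ∀ y, PValid ℓ y → (c y = c (e, 1) ↔ y = (e, 1) ∨ y = (e, 3)) :=
        hint 2 (by omega) (by omega)
      rcases Nat.lt_or_ge k 4 with hk4 | hk4
      · obtain rfl : k = 3 := by omega
        exact step_four he h ha hb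
      · -- the class of `(e, 2)` would be both `{0, 2}` and `{2, 4}`
        exfalso
        have hc : ∀ y, PValid ℓ y → (c y = c (e, 2) ↔ y = (e, 2) ∨ y = (e, 4)) :=
          hint 3 (by omega) (by omega)
        have h2 := (ha (e, 2) ((hpos 2).2 (by omega))).2 (Or.inr rfl)
        have h4 := (hc (e, 4) ((hpos 4).2 (by omega))).2 (Or.inr rfl)
        have := (ha (e, 4) ((hpos 4).2 (by omega))).1 (h4.trans h2)
        simp at this

/-- Shortening all paths, by induction on the set `S` of edges whose path is already short. -/
theorem steps [Finite E] (hk : 2 ≤ k) (hst : ∀ e, s e ≠ t e)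
    (hsimp : ∀ e f v w, v ≠ w → (v = s e ∨ v = t e) → (w = s e ∨ w = t e) →
      (v = s f ∨ v = t f) → (w = s f ∨ w = t f) → e = f)
    (h : TDC (PValid fun _ : E => k + 1) (PAdj s t fun _ => k + 1) n c) :
    ∃ c', TDC (PValid fun _ : E => k) (PAdj s t fun _ => k) n c' := by
  have := Fintype.ofFinite E
  have main : ∀ S : Finset E, ∃ c', TDC (PValid fun e => if e ∈ S then k else k + 1)
      (PAdj s t fun e => if e ∈ S then k else k + 1) n c' := by
    intro S
    induction S using Finset.induction_on with
    | empty => exact ⟨c, by simpa using h⟩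
    | insert a S ha ih =>
      obtain ⟨c', hc'⟩ := ih
      have := step (e := a) hk (by simp [ha]) hst (by intro e; split_ifs <;> omega)
        hsimp hc'
      have heq : Function.update (fun e => if e ∈ S then k else k + 1) a k =
          fun e => if e ∈ insert a S then k else k + 1 := by
        funext e
        by_cases hea : e = a <;> simp [hea]
      rwa [heq] at this
  simpa using main Finset.univ

/-- The injective coloring is a total dominator coloring, since every edge has a neighbor on its own
path. This shows that the set defining `tdec` is nonempty. -/
theorem exists_TDC [Finite E] (hk : 2 ≤ k) :
    ∃ n c, TDC (PValid fun _ : E => k) (PAdj s t fun _ => k) n c := by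
  obtain ⟨m, ⟨φ⟩⟩ := Finite.exists_equiv_fin E
  have hinj : ∀ x y, PValid (fun _ : E => k) x → PValid (fun _ : E => k) y →
      k * (φ x.1 : ℕ) + x.2 = k * (φ y.1 : ℕ) + y.2 → x = y := by
    rintro ⟨a, i⟩ ⟨b, j⟩ hi hj hij
    simp only [PValid] at hi hj hij
    have h1 : (φ a : ℕ) = φ b := by
      have := congrArg (· / k) hij
      simpa [Nat.mul_add_div (show 0 < k by omega), Nat.div_eq_of_lt hi, Nat.div_eq_of_lt hj]
        using this
    have h2 : i = j := by rw [h1] at hij; omega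
    rw [φ.injective (Fin.ext h1), h2]
  refine ⟨k * m, fun x => k * (φ x.1 : ℕ) + x.2, ?_, ?_, ?_⟩
  · rintro ⟨a, i⟩ hi
    have h1 : (φ a : ℕ) + 1 ≤ m := (φ a).2
    have h2 := Nat.mul_le_mul_left k h1
    simp only [PValid] at hi
    rw [Nat.mul_add] at h2
    dsimp only
    omega
  · intro x y hx hy hxy hc
    rw [hinj x y hx hy hc] at hxy
    simp [PAdj] at hxy
  · rintro ⟨a, i⟩ hi
    simp only [PValid] at hi
    obtain ⟨j, hj, hij⟩ : ∃ j < k, i + 1 = j ∨ j + 1 = i := by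
      by_cases h0 : i = 0
      · exact ⟨1, by omega, by omega⟩
      · exact ⟨i - 1, by omega, by omega⟩
    refine ⟨_, ⟨(a, j), hj, rfl⟩, fun y hy hcy => ?_⟩
    rw [hinj y (a, j) hy hj hcy]
    exact Or.inl ⟨rfl, hij⟩

end Model

/-! ### The model and the subdivision graph -/

section Transfer

/-- Total dominator edge colorings of `H` correspond to `TDC` colorings of any encoding `ε` of its
edges that is bijective and respects adjacency. -/
theorem isTDE_iff {X W : Type*} {P : X → Prop} {A : X → X → Prop} {H : SimpleGraph W}
    (ε : X → Sym2 W) (h1 : ∀ z, z ∈ H.edgeSet ↔ ∃ x, P x ∧ ε x = z)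
    (h2 : ∀ x y, P x → P y → (edgeAdj (ε x) (ε y) ↔ A x y))
    (h3 : ∀ x y, P x → P y → ε x = ε y → x = y) (n : ℕ) :
    (∃ c, IsTDEColoring H n c) ↔ ∃ c, TDC P A n c := by
  have tr : ∀ c, IsTDEColoring H n c ↔ TDC P A n (fun x => c (ε x)) := by
    intro c
    constructor
    · rintro ⟨ha, hb, hc⟩
      refine ⟨fun x hx => ha _ ((h1 _).2 ⟨x, hx, rfl⟩), fun x y hx hy hxy =>
        hb _ ((h1 _).2 ⟨x, hx, rfl⟩) _ ((h1 _).2 ⟨y, hy, rfl⟩) ((h2 x y hx hy).2 hxy), ?_⟩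
      intro x hx
      obtain ⟨i, ⟨f, hf, hfi⟩, hi⟩ := hc _ ((h1 _).2 ⟨x, hx, rfl⟩)
      obtain ⟨y, hy, rfl⟩ := (h1 _).1 hf
      exact ⟨i, ⟨y, hy, hfi⟩, fun w hw hcw =>
        (h2 x w hx hw).1 (hi _ ((h1 _).2 ⟨w, hw, rfl⟩) hcw)⟩
    · rintro ⟨ha, hb, hc⟩
      refine ⟨?_, ?_, ?_⟩
      · intro f hf
        obtain ⟨x, hx, rfl⟩ := (h1 _).1 hf
        exact ha x hx
      · intro f hf g hg hfg
        obtain ⟨x, hx, rfl⟩ := (h1 _).1 hf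
        obtain ⟨y, hy, rfl⟩ := (h1 _).1 hg
        exact hb x y hx hy ((h2 x y hx hy).1 hfg)
      · intro f hf
        obtain ⟨x, hx, rfl⟩ := (h1 _).1 hf
        obtain ⟨i, ⟨y, hy, hyi⟩, hi⟩ := hc x hx
        refine ⟨i, ⟨ε y, (h1 _).2 ⟨y, hy, rfl⟩, hyi⟩, ?_⟩
        intro g hg hgi
        obtain ⟨w, hw, rfl⟩ := (h1 _).1 hg
        exact (h2 x w hx hw).2 (hi w hw hgi)
  constructor
  · rintro ⟨c, hc⟩
    exact ⟨_, (tr c).1 hc⟩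
  · rintro ⟨c, hc⟩
    classical
    refine ⟨fun z => if hz : ∃ x, P x ∧ ε x = z then c hz.choose else 0, (tr _).2 ?_⟩
    have heq : ∀ x, P x →
        (if hz : ∃ x', P x' ∧ ε x' = ε x then c hz.choose else 0) = c x := by
      intro x hx
      have hz : ∃ x', P x' ∧ ε x' = ε x := ⟨x, hx, rfl⟩
      rw [dif_pos hz, h3 _ _ hz.choose_spec.1 hx hz.choose_spec.2]
    refine ⟨fun x hx => ?_, fun x y hx hy hxy => ?_, fun x hx => ?_⟩
    · rw [heq x hx]; exact hc.lt x hx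
    · rw [heq x hx, heq y hy]; exact hc.proper x y hx hy hxy
    · obtain ⟨i, ⟨y, hy, hyi⟩, hi⟩ := hc.dom x hx
      exact ⟨i, ⟨y, hy, by rw [heq y hy, hyi]⟩, fun w hw hcw => hi w hw (by rwa [heq w hw] at hcw)⟩

variable {V : Type*} {G : SimpleGraph V}

/-- First endpoint of an edge, as chosen in `subdivision`. -/
noncomputable def esrc (e : G.edgeSet) : V := (Quot.out e.1).1
/-- Second endpoint of an edge, as chosen in `subdivision`. -/
noncomputable def etgt (e : G.edgeSet) : V := (Quot.out e.1).2

theorem edge_eq (e : G.edgeSet) : e.1 = s(esrc e, etgt e) := (Quot.out_eq e.1).symm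

theorem esrc_ne (e : G.edgeSet) : esrc e ≠ etgt e := by
  have := e.2
  rw [edge_eq e] at this
  exact G.ne_of_adj this

theorem edge_unique (e f : G.edgeSet) (v w : V) (hvw : v ≠ w) (h1 : v = esrc e ∨ v = etgt e)
    (h2 : w = esrc e ∨ w = etgt e) (h3 : v = esrc f ∨ v = etgt f)
    (h4 : w = esrc f ∨ w = etgt f) : e = f := by
  apply Subtype.ext
  rw [edge_eq e, edge_eq f, Sym2.eq_iff]
  grind

/-- The `j`-th vertex, `0 ≤ j ≤ k`, of the path replacing `e` in the `k`-subdivision. -/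
noncomputable def pvert (k : ℕ) (e : G.edgeSet) (j : ℕ) : V ⊕ (G.edgeSet × Fin (k - 1)) :=
  if j = 0 then .inl (esrc e)
  else if h : j - 1 < k - 1 then .inr (e, ⟨j - 1, h⟩) else .inl (etgt e)

/-- The edge of the `k`-subdivision encoded by `x = (e, i)`, joining the vertices `i` and `i + 1` of
the path replacing `e`. -/
noncomputable def pedge (k : ℕ) (x : G.edgeSet × ℕ) : Sym2 (V ⊕ (G.edgeSet × Fin (k - 1))) :=
  s(pvert k x.1 x.2, pvert k x.1 (x.2 + 1))

/-- Two path vertices coincide exactly when they are the same vertex of one path or are path ends at a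
common vertex of `G`. -/
theorem pvert_eq {k : ℕ} (hk : 2 ≤ k) (e f : G.edgeSet) (i j : ℕ) (hi : i ≤ k) (hj : j ≤ k) :
    pvert k e i = pvert k f j ↔ (e = f ∧ i = j) ∨
      ∃ v, ((i = 0 ∧ v = esrc e) ∨ (i = k ∧ v = etgt e)) ∧
        ((j = 0 ∧ v = esrc f) ∨ (j = k ∧ v = etgt f)) := by
  -- the vertex `v` is eliminated to leave a form suitable for `grind`
  have hex : (∃ v, ((i = 0 ∧ v = esrc e) ∨ (i = k ∧ v = etgt e)) ∧
        ((j = 0 ∧ v = esrc f) ∨ (j = k ∧ v = etgt f))) ↔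
      (i = 0 ∧ j = 0 ∧ esrc e = esrc f) ∨ (i = 0 ∧ j = k ∧ esrc e = etgt f) ∨
      (i = k ∧ j = 0 ∧ etgt e = esrc f) ∨ (i = k ∧ j = k ∧ etgt e = etgt f) := by
    constructor
    · rintro ⟨v, ⟨h1, rfl⟩ | ⟨h1, rfl⟩, ⟨h2, h3⟩ | ⟨h2, h3⟩⟩ <;> simp [h1, h2, h3]
    · rintro (⟨h1, h2, h3⟩ | ⟨h1, h2, h3⟩ | ⟨h1, h2, h3⟩ | ⟨h1, h2, h3⟩)
      · exact ⟨_, Or.inl ⟨h1, rfl⟩, Or.inl ⟨h2, h3⟩⟩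
      · exact ⟨_, Or.inl ⟨h1, rfl⟩, Or.inr ⟨h2, h3⟩⟩
      · exact ⟨_, Or.inr ⟨h1, rfl⟩, Or.inl ⟨h2, h3⟩⟩
      · exact ⟨_, Or.inr ⟨h1, rfl⟩, Or.inr ⟨h2, h3⟩⟩
  rw [hex]
  unfold pvert
  split_ifs <;> simp <;> grind

theorem mem_edgeSet_subdivision {k : ℕ} (hk : 2 ≤ k) (z) :
    z ∈ (subdivision G k).edgeSet ↔ ∃ x, PValid (fun _ : G.edgeSet => k) x ∧ pedge k x = z := by
  have hadj : ∀ a b, (subdivision G k).Adj a b → ∃ x,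
      PValid (fun _ : G.edgeSet => k) x ∧ pedge k x = s(a, b) := by
    intro a b hab
    rw [subdivision, SimpleGraph.fromRel_adj] at hab
    have main : ∀ a b : V ⊕ (G.edgeSet × Fin (k - 1)), (match a, b with
        | .inl v, .inl w => k = 1 ∧ G.Adj v w
        | .inl v, .inr (e, i) =>
            (v = (Quot.out e.1).1 ∧ (i : ℕ) = 0) ∨
            (v = (Quot.out e.1).2 ∧ (i : ℕ) = k - 2)
        | .inr _, .inl _ => False
        | .inr (e, i), .inr (f, j) => e = f ∧ (j : ℕ) = (i : ℕ) + 1) → ∃ x,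
        PValid (fun _ : G.edgeSet => k) x ∧ pedge k x = s(a, b) := by
      rintro (v | ⟨e, i⟩) (w | ⟨f, j⟩) h
      · exact absurd h.1 (by omega)
      · rcases h with ⟨rfl, hj⟩ | ⟨rfl, hj⟩
        · refine ⟨(f, 0), by simp only [PValid]; omega, ?_⟩
          change s(pvert k f 0, pvert k f 1) = _
          rw [pvert, if_pos rfl, pvert, if_neg (by omega), dif_pos (by omega)]
          congr 3
          ext; simp [hj]
        · refine ⟨(f, k - 1), by simp only [PValid]; omega, ?_⟩
          simp only [pedge, pvert]
          rw [if_neg (by omega), if_neg (by omega), dif_pos (by omega), dif_neg (by omega),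
            Sym2.eq_swap]
          congr 3
          ext; simp only; omega
      · exact h.elim
      · obtain ⟨rfl, hj⟩ := h
        have := j.2
        refine ⟨(e, i + 1), by simp only [PValid]; omega, ?_⟩
        simp only [pedge, pvert]
        rw [if_neg (by omega), if_neg (by omega), dif_pos (by omega), dif_pos (by omega)]
        congr 3
        ext; simp [hj]
    rcases hab.2 with h | h
    · exact main a b h
    · obtain ⟨x, hx, hx'⟩ := main b a h
      exact ⟨x, hx, hx'.trans Sym2.eq_swap⟩
  constructor
  · induction z using Sym2.ind with
    | _ a b => exact hadj a b
  · rintro ⟨⟨e, i⟩, hi, rfl⟩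
    simp only [PValid] at hi
    rw [pedge, SimpleGraph.mem_edgeSet, subdivision, SimpleGraph.fromRel_adj]
    refine ⟨?_, ?_⟩
    · rw [Ne, pvert_eq hk e e i (i + 1) (by omega) (by omega)]
      have := esrc_ne e
      grind
    · unfold pvert
      simp only
      by_cases h0 : i = 0
      · rw [if_pos h0, if_neg (by omega), dif_pos (by omega)]
        exact Or.inl (Or.inl ⟨rfl, by simp [h0]⟩)
      · rw [if_neg h0, if_neg (by omega), dif_pos (by omega)]
        by_cases hlast : i + 1 = k
        · rw [dif_neg (by omega)]
          exact Or.inr (Or.inr ⟨rfl, by simp only; omega⟩)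
        · rw [dif_pos (by omega)]
          exact Or.inl ⟨rfl, by simp only; omega⟩

theorem pedge_inj {k : ℕ} (hk : 2 ≤ k) (x y : G.edgeSet × ℕ) (hx : x.2 < k) (hy : y.2 < k)
    (h : pedge k x = pedge k y) : x = y := by
  obtain ⟨e, i⟩ := x; obtain ⟨f, j⟩ := y
  dsimp only at hx hy
  simp only [pedge, Sym2.eq_iff] at h
  rw [pvert_eq hk _ _ _ _ (by omega) (by omega), pvert_eq hk _ _ _ _ (by omega) (by omega),
    pvert_eq hk _ _ _ _ (by omega) (by omega), pvert_eq hk _ _ _ _ (by omega) (by omega)] at h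
  have := esrc_ne e
  have := esrc_ne f
  grind

theorem pedge_adj {k : ℕ} (hk : 2 ≤ k) (x y : G.edgeSet × ℕ) (hx : x.2 < k) (hy : y.2 < k) :
    edgeAdj (pedge k x) (pedge k y) ↔ PAdj esrc etgt (fun _ => k) x y := by
  have hinj := pedge_inj hk x y hx hy
  obtain ⟨e, i⟩ := x; obtain ⟨f, j⟩ := y
  dsimp only at hx hy
  have hmem : (∃ v, v ∈ pedge k (e, i) ∧ v ∈ pedge k (f, j)) ↔
      ∃ i' j', (i' = i ∨ i' = i + 1) ∧ (j' = j ∨ j' = j + 1) ∧ pvert k e i' = pvert k f j' := by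
    simp only [pedge, Sym2.mem_iff]
    constructor
    · rintro ⟨v, rfl | rfl, h | h⟩
      · exact ⟨_, _, Or.inl rfl, Or.inl rfl, h⟩
      · exact ⟨_, _, Or.inl rfl, Or.inr rfl, h⟩
      · exact ⟨_, _, Or.inr rfl, Or.inl rfl, h⟩
      · exact ⟨_, _, Or.inr rfl, Or.inr rfl, h⟩
    · rintro ⟨i', j', rfl | rfl, rfl | rfl, h⟩
      · exact ⟨_, Or.inl rfl, Or.inl h⟩
      · exact ⟨_, Or.inl rfl, Or.inr h⟩
      · exact ⟨_, Or.inr rfl, Or.inl h⟩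
      · exact ⟨_, Or.inr rfl, Or.inr h⟩
  have hne : pedge k (e, i) ≠ pedge k (f, j) ↔ (e, i) ≠ (f, j) :=
    ⟨fun h h' => h (by rw [h']), fun h h' => h (hinj h')⟩
  rw [edgeAdj, hmem, hne]
  constructor
  · rintro ⟨hij, i', j', hi', hj', h⟩
    rw [pvert_eq hk _ _ _ _ (by omega) (by omega)] at h
    rcases h with ⟨rfl, rfl⟩ | ⟨v, h1, h2⟩
    · refine Or.inl ⟨rfl, ?_⟩
      simp only [ne_eq, Prod.mk.injEq, true_and] at hij
      clear hinj hmem hne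
      dsimp only
      omega
    · by_cases hef : e = f
      · subst hef
        have := esrc_ne e
        simp only [ne_eq, Prod.mk.injEq, true_and] at hij
        exfalso
        grind
      · refine Or.inr ⟨hef, v, ?_, ?_⟩ <;> unfold PAt <;> dsimp only <;> grind
  · rintro (⟨h1, h2⟩ | ⟨h1, v, h2, h3⟩)
    · dsimp only at h1 h2
      subst h1
      refine ⟨by simp only [ne_eq, Prod.mk.injEq, true_and]; omega, ?_⟩
      rcases h2 with rfl | rfl
      · exact ⟨i + 1, i + 1, Or.inr rfl, Or.inl rfl, rfl⟩
      · exact ⟨j + 1, j + 1, Or.inl rfl, Or.inr rfl, rfl⟩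
    · dsimp only at h1
      refine ⟨fun h => h1 (Prod.mk.inj h).1, ?_⟩
      rcases h2 with ⟨h2, h2'⟩ | ⟨h2, h2'⟩ <;> rcases h3 with ⟨h3, h3'⟩ | ⟨h3, h3'⟩ <;>
        dsimp only at h2 h2' h3 h3'
      · exact ⟨i, j, Or.inl rfl, Or.inl rfl, (pvert_eq hk _ _ _ _ (by omega) (by omega)).2
          (Or.inr ⟨v, Or.inl ⟨h2, h2'⟩, Or.inl ⟨h3, h3'⟩⟩)⟩
      · exact ⟨i, j + 1, Or.inl rfl, Or.inr rfl, (pvert_eq hk _ _ _ _ (by omega) (by omega)).2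
          (Or.inr ⟨v, Or.inl ⟨h2, h2'⟩, Or.inr ⟨h3, h3'⟩⟩)⟩
      · exact ⟨i + 1, j, Or.inr rfl, Or.inl rfl, (pvert_eq hk _ _ _ _ (by omega) (by omega)).2
          (Or.inr ⟨v, Or.inr ⟨h2, h2'⟩, Or.inl ⟨h3, h3'⟩⟩)⟩
      · exact ⟨i + 1, j + 1, Or.inr rfl, Or.inr rfl, (pvert_eq hk _ _ _ _ (by omega) (by omega)).2
          (Or.inr ⟨v, Or.inr ⟨h2, h2'⟩, Or.inr ⟨h3, h3'⟩⟩)⟩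

theorem exists_isTDE_iff {k : ℕ} (hk : 2 ≤ k) (n : ℕ) :
    (∃ c, IsTDEColoring (subdivision G k) n c) ↔
      ∃ c, TDC (PValid fun _ : G.edgeSet => k) (PAdj esrc etgt fun _ => k) n c :=
  isTDE_iff (pedge k) (mem_edgeSet_subdivision hk) (fun x y hx hy => pedge_adj hk x y hx hy)
    (fun x y hx hy => pedge_inj hk x y hx hy) n

end Transfer

/-- For a connected graph G with at least one edge and k ≥ 2,
χ'ᵗ_d(G^{1/k}) ≤ χ'ᵗ_d(G^{1/(k+1)}). -/
theorem tdec_subdivision_mono {V : Type*} [Fintype V] (G : SimpleGraph V)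
    (hconn : G.Connected) (hm : G.edgeSet.Nonempty) (k : ℕ) (hk : 2 ≤ k) :
    tdec (subdivision G k) ≤ tdec (subdivision G (k + 1)) := by
  classical
  have hne : {n | ∃ c, IsTDEColoring (subdivision G (k + 1)) n c}.Nonempty := by
    obtain ⟨n, hn⟩ := exists_TDC (E := G.edgeSet) (s := esrc) (t := etgt)
      (show 2 ≤ k + 1 by omega)
    exact ⟨n, (exists_isTDE_iff (by omega) n).2 hn⟩
  obtain ⟨c, hc⟩ := (exists_isTDE_iff (by omega) _).1 (Nat.sInf_mem hne)
  exact Nat.sInf_le ((exists_isTDE_iff hk _).2 (steps hk esrc_ne edge_unique hc))
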